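/- Let K be a compact Hausdorff space, F ⊂ K a closed subset, and D ⊂ K a set induced by an r-skeleton in K. If D ∩ F is dense in F, then D ∩ F is induced by an r-skeleton in the compact space F. -/

import Mathlib

/-!
The retractions of the new skeleton are the restrictions to `F` of those `r s` that map `F` into
itself. The set of such indices is closed under suprema of increasing sequences because `F` is
closed, and everything else follows from its cofinality, which is
`RetractionalSkeleton.exists_ge_mapsTo`.

For cofinality, start from `s` and build an increasing sequence `s = f 0 ≤ f 1 ≤ ...` together with
countable sets `A n ⊆ D ∩ F` such that `r (f n) '' A n` is dense in `r (f n) '' F` (possible since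
`range (r (f n))` is second countable and `D ∩ F` is dense in `F`) and `A n ⊆ range (r (f (n + 1)))`.
Let `t` be the supremum of the sequence and `C = closure (⋃ n, A n)`. Then `C ⊆ F` is compact and is
fixed pointwise by `r t`. For `x ∈ F` and each `n` the fibre `{y ∈ C | r (f n) y = r (f n) x}` is
nonempty; these fibres decrease with `n`, so by compactness some `y ∈ C` lies in all of them. Hence
`r t x = r t y = y ∈ F`.
-/

open Filter Topology TopologicalSpace Set

universe u v

/-- A retractional skeleton in a topological space `K`: a family `r s : C(K, K)` of continuous
retractions indexed by an up-directed (nonempty) partially ordered set `Γ` such that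
(i) each `r s` has metrizable range and the net `(r s x)` converges to `x`;
(ii) `s ≤ t` implies `r s ∘ r t = r t ∘ r s = r s`;
(iii) each strictly increasing sequence has a supremum `t` and `r t x = lim_n r (f n) x`. -/
structure RetractionalSkeleton (K : Type u) [TopologicalSpace K] : Type (u + 1) where
  Γ : Type u
  [po : PartialOrder Γ]
  [ne : Nonempty Γ]
  directed : ∀ s t : Γ, ∃ w, s ≤ w ∧ t ≤ w
  r : Γ → C(K, K)
  isRetraction : ∀ s, ∀ x : K, r s (r s x) = r s x
  metrizable : ∀ s, MetrizableSpace ↥(Set.range (r s))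
  tendsto_id : ∀ x : K, Tendsto (fun s => r s x) atTop (𝓝 x)
  comp_eq_of_le : ∀ s t : Γ, s ≤ t → ∀ x : K, r s (r t x) = r s x ∧ r t (r s x) = r s x
  sup_seq : ∀ f : ℕ → Γ, StrictMono f → ∃ t : Γ, IsLUB (Set.range f) t ∧
    ∀ x : K, Tendsto (fun n => r (f n) x) atTop (𝓝 (r t x))

/-- The set `D(𝔰) = ⋃ s, r s [K]` induced by a retractional skeleton. -/
def RetractionalSkeleton.inducedSet {K : Type u} [TopologicalSpace K]
    (𝔰 : RetractionalSkeleton K) : Set K := ⋃ s, Set.range (𝔰.r s)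

/-- `D` is induced by an r-skeleton in `K`. -/
def IsInducedByRSkeleton {K : Type u} [TopologicalSpace K] (D : Set K) : Prop :=
  ∃ 𝔰 : RetractionalSkeleton K, 𝔰.inducedSet = D

/-- `K` has a retractional skeleton. -/
def HasRetractionalSkeleton (K : Type u) [TopologicalSpace K] : Prop :=
  Nonempty (RetractionalSkeleton K)

attribute [local instance] RetractionalSkeleton.po RetractionalSkeleton.ne

namespace RetractionalSkeleton

variable {K : Type u} [TopologicalSpace K]

lemma apply_eq_of_mem_range_of_le (𝔰 : RetractionalSkeleton K) {s t : 𝔰.Γ} (h : s ≤ t) {x : K}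
    (hx : x ∈ range (𝔰.r s)) : 𝔰.r t x = x := by
  obtain ⟨y, rfl⟩ := hx
  exact (𝔰.comp_eq_of_le s t h y).2

/-- The form in which `sup_seq` is used for sequences that are only weakly increasing: there is an
upper bound `t` such that `r t x` is determined by the values `r (f n) x`. -/
lemma exists_bound_of_monotone [T2Space K] (𝔰 : RetractionalSkeleton K) (f : ℕ → 𝔰.Γ)
    (hf : Monotone f) :
    ∃ t, (∀ n, f n ≤ t) ∧
      ∀ x y, (∀ n, 𝔰.r (f n) x = 𝔰.r (f n) y) → 𝔰.r t x = 𝔰.r t y := by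
  by_cases h : ∃ N, ∀ n, f n ≤ f N
  · obtain ⟨N, hN⟩ := h
    exact ⟨f N, hN, fun x y hxy => hxy N⟩
  · -- Otherwise the sequence has a strictly increasing, hence cofinal, subsequence.
    push Not at h
    choose g hg using h
    have hlt : ∀ N, N < g N := fun N => by
      by_contra hle
      exact hg N (hf (not_lt.1 hle))
    have hφ : StrictMono fun k => g^[k] 0 := strictMono_nat_of_lt_succ fun k => by
      rw [Function.iterate_succ_apply']
      exact hlt _
    have hfφ : StrictMono fun k => f (g^[k] 0) := strictMono_nat_of_lt_succ fun k => by
      rw [Function.iterate_succ_apply']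
      exact lt_of_le_not_ge (hf (hlt _).le) (hg _)
    obtain ⟨t, ht, hlim⟩ := 𝔰.sup_seq _ hfφ
    refine ⟨t, fun n => (hf (hφ.le_apply (x := n))).trans (ht.1 ⟨n, rfl⟩), fun x y hxy => ?_⟩
    refine tendsto_nhds_unique (hlim x) ?_
    simpa only [hxy] using hlim y

lemma exists_ge_subset_range [T2Space K] (𝔰 : RetractionalSkeleton K) (s : 𝔰.Γ) {A : Set K}
    (hA : A.Countable) (hAD : A ⊆ 𝔰.inducedSet) : ∃ t, s ≤ t ∧ A ⊆ range (𝔰.r t) := by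
  rcases A.eq_empty_or_nonempty with rfl | hne
  · exact ⟨s, le_rfl, empty_subset _⟩
  obtain ⟨a, rfl⟩ := hA.exists_eq_range hne
  have ha : ∀ n, ∃ u, a n ∈ range (𝔰.r u) := fun n => mem_iUnion.1 (hAD ⟨n, rfl⟩)
  choose u hu using ha
  choose w hw₁ hw₂ using 𝔰.directed
  let f : ℕ → 𝔰.Γ := fun n => Nat.rec s (fun n p => w p (u n)) n
  have hf : Monotone f := monotone_nat_of_le_succ fun n => hw₁ (f n) (u n)
  obtain ⟨t, ht, -⟩ := 𝔰.exists_bound_of_monotone f hf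
  refine ⟨t, ht 0, ?_⟩
  rintro _ ⟨n, rfl⟩
  exact ⟨a n, 𝔰.apply_eq_of_mem_range_of_le ((hw₂ (f n) (u n)).trans (ht (n + 1))) (hu n)⟩

lemma exists_countable_image_dense [CompactSpace K] (𝔰 : RetractionalSkeleton K) (s : 𝔰.Γ)
    (E : Set K) : ∃ A ⊆ E, A.Countable ∧ 𝔰.r s '' E ⊆ closure (𝔰.r s '' A) := by
  have := 𝔰.metrizable s
  have : CompactSpace (range (𝔰.r s)) :=
    isCompact_iff_compactSpace.1 (isCompact_range (𝔰.r s).continuous)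
  let : MetricSpace (range (𝔰.r s)) := metrizableSpaceMetric _
  have : SecondCountableTopology (range (𝔰.r s)) := inferInstance
  have : SecondCountableTopology (𝔰.r s '' E) :=
    (Topology.IsEmbedding.inclusion (image_subset_range (𝔰.r s) E)).secondCountableTopology
  obtain ⟨c, hc, hcd⟩ := exists_countable_dense (𝔰.r s '' E)
  choose g hgE hg using fun y : 𝔰.r s '' E => y.2
  refine ⟨g '' c, image_subset_iff.2 fun y _ => hgE y, hc.image g, ?_⟩
  have him : 𝔰.r s '' (g '' c) = Subtype.val '' c := by
    rw [image_image]
    exact image_congr fun y _ => hg y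
  rw [him]
  exact Subtype.dense_iff.1 hcd

/-- The indices whose retraction maps `F` into itself are cofinal. -/
lemma exists_ge_mapsTo [CompactSpace K] [T2Space K] (𝔰 : RetractionalSkeleton K) {F : Set K}
    (hF : IsClosed F) (hdense : F ⊆ closure (𝔰.inducedSet ∩ F)) (s : 𝔰.Γ) :
    ∃ t, s ≤ t ∧ MapsTo (𝔰.r t) F F := by
  choose A hAsub hAc hAd using fun s => 𝔰.exists_countable_image_dense s (𝔰.inducedSet ∩ F)
  choose w hw₁ hw₂ using fun s =>
    𝔰.exists_ge_subset_range s (hAc s) ((hAsub s).trans inter_subset_left)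
  let f : ℕ → 𝔰.Γ := fun n => Nat.rec s (fun _ p => w p) n
  have hf : Monotone f := monotone_nat_of_le_succ fun n => hw₁ (f n)
  obtain ⟨t, ht, hdet⟩ := 𝔰.exists_bound_of_monotone f hf
  refine ⟨t, ht 0, fun x hx => ?_⟩
  let C : Set K := closure (⋃ n, A (f n))
  have hCF : C ⊆ F :=
    closure_minimal (iUnion_subset fun n => (hAsub (f n)).trans inter_subset_right) hF
  have hCt : ∀ y ∈ C, 𝔰.r t y = y := by
    have hcl : IsClosed {y | 𝔰.r t y = y} := isClosed_eq (𝔰.r t).continuous continuous_id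
    refine closure_minimal (iUnion_subset fun n y hy => ?_) hcl
    exact 𝔰.apply_eq_of_mem_range_of_le (ht (n + 1)) (hw₂ (f n) hy)
  have hCcl : IsClosed C := isClosed_closure
  have hmem : ∀ n, 𝔰.r (f n) x ∈ 𝔰.r (f n) '' C := fun n => by
    have hcl : IsClosed (𝔰.r (f n) '' C) := (hCcl.isCompact.image (𝔰.r (f n)).continuous).isClosed
    have h₁ : 𝔰.r (f n) x ∈ closure (𝔰.r (f n) '' (𝔰.inducedSet ∩ F)) :=
      image_closure_subset_closure_image (𝔰.r (f n)).continuous ⟨x, hdense hx, rfl⟩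
    have h₂ : 𝔰.r (f n) x ∈ closure (𝔰.r (f n) '' A (f n)) :=
      closure_minimal (hAd (f n)) isClosed_closure h₁
    exact closure_minimal
      (image_mono ((subset_iUnion (fun n => A (f n)) n).trans subset_closure)) hcl h₂
  let V : ℕ → Set K := fun n => C ∩ {y | 𝔰.r (f n) y = 𝔰.r (f n) x}
  have hVcl : ∀ n, IsClosed (V n) := fun n =>
    hCcl.inter (isClosed_eq (𝔰.r (f n)).continuous continuous_const)
  obtain ⟨y, hy⟩ : (⋂ n, V n).Nonempty := by
    refine IsCompact.nonempty_iInter_of_sequence_nonempty_isCompact_isClosed V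
      (fun n => ?_) (fun n => ?_) (hVcl 0).isCompact hVcl
    · rintro y ⟨hyC, hy⟩
      refine ⟨hyC, ?_⟩
      have hle := 𝔰.comp_eq_of_le _ _ (hf n.le_succ)
      change 𝔰.r (f n) y = 𝔰.r (f n) x
      rw [← (hle y).1, ← (hle x).1]
      exact congrArg _ hy
    · obtain ⟨y, hyC, hy⟩ := hmem n
      exact ⟨y, hyC, hy⟩
  have hy' := mem_iInter.1 hy
  rw [← hdet y x fun n => (hy' n).2, hCt y (hy' 0).1]
  exact hCF (hy' 0).1

/-- The restriction of a skeleton to a closed set `F`, indexed by those `s` for which `r s` maps `F`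
into itself, provided that such indices are cofinal. -/
def restrict (𝔰 : RetractionalSkeleton K) {F : Set K} (hF : IsClosed F)
    (hcof : ∀ s, ∃ t, s ≤ t ∧ MapsTo (𝔰.r t) F F) : RetractionalSkeleton F where
  Γ := {s : 𝔰.Γ // MapsTo (𝔰.r s) F F}
  po := inferInstance
  ne := let ⟨t, _, ht⟩ := hcof (Classical.arbitrary 𝔰.Γ); ⟨⟨t, ht⟩⟩
  directed s t := by
    obtain ⟨w, hsw, htw⟩ := 𝔰.directed s t
    obtain ⟨z, hwz, hz⟩ := hcof w
    exact ⟨⟨z, hz⟩, hsw.trans hwz, htw.trans hwz⟩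
  r s := ⟨s.2.restrict, (𝔰.r s.1).continuous.restrict s.2⟩
  isRetraction s x := Subtype.ext (𝔰.isRetraction s.1 x)
  metrizable s := by
    have := 𝔰.metrizable s.1
    have hmaps : ∀ y : range (s.2.restrict (𝔰.r s.1) F F), (y : F).1 ∈ range (𝔰.r s.1) := by
      rintro ⟨_, x, rfl⟩
      exact ⟨x, rfl⟩
    exact (Topology.IsEmbedding.codRestrict
      (Topology.IsEmbedding.subtypeVal.comp Topology.IsEmbedding.subtypeVal)
      (range (𝔰.r s.1)) hmaps).metrizableSpace
  tendsto_id x := by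
    have hval : Tendsto (Subtype.val : {s : 𝔰.Γ // MapsTo (𝔰.r s) F F} → 𝔰.Γ) atTop atTop := by
      refine tendsto_atTop.2 fun b => ?_
      obtain ⟨t, hbt, ht⟩ := hcof b
      filter_upwards [mem_atTop (⟨t, ht⟩ : {s : 𝔰.Γ // MapsTo (𝔰.r s) F F})] with s hs
      exact hbt.trans hs
    exact tendsto_subtype_rng.2 ((𝔰.tendsto_id x).comp hval)
  comp_eq_of_le s t h x :=
    ⟨Subtype.ext (𝔰.comp_eq_of_le s.1 t.1 h x).1, Subtype.ext (𝔰.comp_eq_of_le s.1 t.1 h x).2⟩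
  sup_seq f hf := by
    obtain ⟨t, ht, hlim⟩ := 𝔰.sup_seq (fun n => (f n).1) fun m n h => hf h
    have htF : MapsTo (𝔰.r t) F F := fun x hx =>
      hF.mem_of_tendsto (hlim x) (Eventually.of_forall fun n => (f n).2 hx)
    refine ⟨⟨t, htF⟩, ⟨?_, fun b hb => ?_⟩, fun x => tendsto_subtype_rng.2 (hlim x)⟩
    · rintro _ ⟨n, rfl⟩
      exact ht.1 ⟨n, rfl⟩
    · refine ht.2 ?_
      rintro _ ⟨n, rfl⟩
      exact hb ⟨n, rfl⟩

lemma inducedSet_restrict (𝔰 : RetractionalSkeleton K) {F : Set K} (hF : IsClosed F)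
    (hcof : ∀ s, ∃ t, s ≤ t ∧ MapsTo (𝔰.r t) F F) :
    (𝔰.restrict hF hcof).inducedSet = Subtype.val ⁻¹' 𝔰.inducedSet := by
  ext x
  constructor
  · intro hx
    obtain ⟨s, y, rfl⟩ := mem_iUnion.1 hx
    exact mem_iUnion.2 ⟨s.1, y, rfl⟩
  · intro hx
    obtain ⟨s, hs⟩ := mem_iUnion.1 hx
    obtain ⟨t, hst, ht⟩ := hcof s
    exact mem_iUnion.2 ⟨⟨t, ht⟩, x, Subtype.ext (𝔰.apply_eq_of_mem_range_of_le hst hs)⟩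

end RetractionalSkeleton

/-- If `D` is induced by an r-skeleton in a compact Hausdorff space `K`, `F ⊆ K` is closed
and `D ∩ F` is dense in `F`, then `D ∩ F` is induced by an r-skeleton in the compact
space `F`. -/
theorem inducedByRSkeleton_inter_closed (K : Type u) [TopologicalSpace K] [CompactSpace K]
    [T2Space K] (F : Set K) (hF : IsClosed F) (D : Set K) (hD : IsInducedByRSkeleton D)
    (hdense : F ⊆ closure (D ∩ F)) :
    IsInducedByRSkeleton (Subtype.val ⁻¹' D : Set ↥F) := by
  obtain ⟨𝔰, rfl⟩ := hD
  exact ⟨𝔰.restrict hF (𝔰.exists_ge_mapsTo hF hdense), 𝔰.inducedSet_restrict hF _⟩
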